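/- arXiv:0711.1135 — 2 statements merged into one kernel-verified Lean document; each statement's English description precedes it below -/
import Mathlib

section
/- Let Q be a connected quiver and V a representation of Q over a field K. Then the dimension dim_K (rkf V)_x is the same for all vertices x of Q. -/
open Submodule

section Defs

variable {K : Type} [Field K]
variable {Q₀ Q₁ : Type} (tl hd : Q₁ → Q₀)
variable (Vx : Q₀ → Type) [∀ x, AddCommGroup (Vx x)] [∀ x, Module K (Vx x)]
variable (Va : ∀ a : Q₁, Vx (tl a) →ₗ[K] Vx (hd a))

/-- `U` is a subrepresentation of the representation `(Vx, Va)`. -/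
def IsSubrep (U : ∀ x, Submodule K (Vx x)) : Prop :=
  ∀ a : Q₁, (U (tl a)).map (Va a) ≤ U (hd a)

/-- `U` is an epimorphic subrepresentation: `V_a(U_{ta}) = U_{ha}` for every arrow. -/
def IsEpiSub (U : ∀ x, Submodule K (Vx x)) : Prop :=
  ∀ a : Q₁, (U (tl a)).map (Va a) = U (hd a)

/-- `N` is a coclosed subrepresentation: it is a subrepresentation and
`V_a⁻¹(N_{ha}) ⊆ N_{ta}` for every arrow. -/
def IsCoclosedSub (N : ∀ x, Submodule K (Vx x)) : Prop :=
  IsSubrep tl hd Vx Va N ∧ ∀ a : Q₁, (N (hd a)).comap (Va a) ≤ N (tl a)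

/-- `Γ(V)`, the sum of all epimorphic subrepresentations. -/
def Gamma (x : Q₀) : Submodule K (Vx x) :=
  ⨆ U : {U : ∀ y, Submodule K (Vx y) // IsEpiSub tl hd Vx Va U}, U.1 x

/-- `Δ(V)`, the intersection of all coclosed subrepresentations. -/
def Delta (x : Q₀) : Submodule K (Vx x) :=
  ⨅ N : {N : ∀ y, Submodule K (Vx y) // IsCoclosedSub tl hd Vx Va N}, N.1 x

lemma le_gamma {U : ∀ y, Submodule K (Vx y)} (hU : IsEpiSub tl hd Vx Va U) (x : Q₀) :
    U x ≤ Gamma tl hd Vx Va x :=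
  le_iSup (fun (W : {U // IsEpiSub tl hd Vx Va U}) => W.1 x) ⟨U, hU⟩

lemma delta_le {N : ∀ y, Submodule K (Vx y)} (hN : IsCoclosedSub tl hd Vx Va N) (x : Q₀) :
    Delta tl hd Vx Va x ≤ N x :=
  iInf_le (fun (W : {N // IsCoclosedSub tl hd Vx Va N}) => W.1 x) ⟨N, hN⟩

lemma gamma_epi : IsEpiSub tl hd Vx Va (Gamma tl hd Vx Va) := by
  intro a
  apply le_antisymm
  · rw [Gamma, Submodule.map_iSup]
    refine iSup_le fun U => ?_
    rw [U.2 a]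
    exact le_gamma tl hd Vx Va U.2 (hd a)
  · refine iSup_le fun U => ?_
    rw [← U.2 a]
    exact Submodule.map_mono (le_gamma tl hd Vx Va U.2 (tl a))

lemma gamma_subrep : IsSubrep tl hd Vx Va (Gamma tl hd Vx Va) :=
  fun a => le_of_eq (gamma_epi tl hd Vx Va a)

lemma delta_subrep : IsSubrep tl hd Vx Va (Delta tl hd Vx Va) := by
  intro a
  have : ∀ N : {N // IsCoclosedSub tl hd Vx Va N},
      (Delta tl hd Vx Va (tl a)).map (Va a) ≤ N.1 (hd a) :=
    fun N => le_trans (Submodule.map_mono (delta_le tl hd Vx Va N.2 (tl a))) (N.2.1 a)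
  exact le_iInf this

/-- `Γ(V) + Δ(V)` pointwise. -/
abbrev GD (x : Q₀) : Submodule K (Vx x) := Gamma tl hd Vx Va x ⊔ Delta tl hd Vx Va x

/-- `Δ(V)`, seen inside `Γ(V) + Δ(V)`. -/
abbrev rkfDen (x : Q₀) : Submodule K (GD tl hd Vx Va x) :=
  (Delta tl hd Vx Va x).comap (GD tl hd Vx Va x).subtype

/-- The vertex spaces `(Γ(V)_x + Δ(V)_x)/Δ(V)_x` of the global tensor functor. -/
abbrev rkfSpace (x : Q₀) : Type :=
  GD tl hd Vx Va x ⧸ rkfDen tl hd Vx Va x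

lemma gd_mapsTo (a : Q₁) : ∀ v ∈ GD tl hd Vx Va (tl a), Va a v ∈ GD tl hd Vx Va (hd a) := by
  intro v hv
  have : (GD tl hd Vx Va (tl a)).map (Va a) ≤ GD tl hd Vx Va (hd a) := by
    rw [Submodule.map_sup]
    exact sup_le_sup (gamma_subrep tl hd Vx Va a) (delta_subrep tl hd Vx Va a)
  exact this ⟨v, hv, rfl⟩

/-- The arrow maps of the global tensor functor, induced by the `V_a`. -/
def rkfMap (a : Q₁) : rkfSpace tl hd Vx Va (tl a) →ₗ[K] rkfSpace tl hd Vx Va (hd a) :=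
  Submodule.liftQ _
    ((rkfDen tl hd Vx Va (hd a)).mkQ ∘ₗ (Va a).restrict (gd_mapsTo tl hd Vx Va a))
    (by
      intro v hv
      simp only [LinearMap.mem_ker, LinearMap.comp_apply, Submodule.mkQ_apply,
        Submodule.Quotient.mk_eq_zero]
      have hv' : (v : Vx (tl a)) ∈ Delta tl hd Vx Va (tl a) := hv
      show (Va a) (v : Vx (tl a)) ∈ Delta tl hd Vx Va (hd a)
      exact delta_subrep tl hd Vx Va a ⟨(v : Vx (tl a)), hv', rfl⟩)

/-- Isomorphism of quiver representations. -/
def RepIso (Wx : Q₀ → Type) [∀ x, AddCommGroup (Wx x)] [∀ x, Module K (Wx x)]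
    (Wa : ∀ a : Q₁, Wx (tl a) →ₗ[K] Wx (hd a)) : Prop :=
  ∃ φ : ∀ x, Vx x ≃ₗ[K] Wx x, ∀ (a : Q₁) (v : Vx (tl a)), φ (hd a) (Va a v) = Wa a (φ (tl a) v)

end Defs

/-! Every arrow `a` acts bijectively on `rkf V`: since `Γ(V)` is epimorphic, `V_a` maps `Γ(V)_{ta}`
onto `Γ(V)_{ha}`, and since `Δ(V)` is coclosed, anything that `V_a` sends into `Δ(V)_{ha}` already
vanishes modulo `Δ(V)_{ta}`. In a connected quiver any two vertices are joined by a zigzag of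
arrows. -/

section Rkf

variable {K : Type} [Field K]
variable {Q₀ Q₁ : Type} (tl hd : Q₁ → Q₀)
variable (Vx : Q₀ → Type) [∀ x, AddCommGroup (Vx x)] [∀ x, Module K (Vx x)]
variable (Va : ∀ a : Q₁, Vx (tl a) →ₗ[K] Vx (hd a))

lemma delta_coclosed : IsCoclosedSub tl hd Vx Va (Delta tl hd Vx Va) :=
  ⟨delta_subrep tl hd Vx Va, fun a => le_iInf fun N =>
    (comap_mono (delta_le tl hd Vx Va N.2 (hd a))).trans (N.2.2 a)⟩

lemma rkfMap_injective (a : Q₁) : Function.Injective (rkfMap tl hd Vx Va a) := by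
  refine LinearMap.ker_eq_bot.mp (ker_liftQ_eq_bot _ _ _ fun v hv => ?_)
  have map_mem_delta : Va a v ∈ Delta tl hd Vx Va (hd a) :=
    (Submodule.Quotient.mk_eq_zero (rkfDen tl hd Vx Va (hd a))).mp hv
  exact (delta_coclosed tl hd Vx Va).2 a map_mem_delta

lemma rkfMap_surjective (a : Q₁) : Function.Surjective (rkfMap tl hd Vx Va a) := by
  intro q
  obtain ⟨⟨w, hw⟩, rfl⟩ := mkQ_surjective _ q
  obtain ⟨g, hg, d, hdΔ, rfl⟩ := mem_sup.mp hw
  obtain ⟨u, hu, rfl⟩ := (gamma_epi tl hd Vx Va a).ge hg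
  refine ⟨mkQ _ ⟨u, mem_sup_left hu⟩, (Submodule.Quotient.eq _).mpr ?_⟩
  change Va a u - (Va a u + d) ∈ Delta tl hd Vx Va (hd a)
  simpa using hdΔ

/-- The arrow map `rkfMap` as an isomorphism, for transporting `rkf V` along arrows in both
directions. -/
noncomputable def rkfEquiv (a : Q₁) :
    rkfSpace tl hd Vx Va (tl a) ≃ₗ[K] rkfSpace tl hd Vx Va (hd a) :=
  .ofBijective (rkfMap tl hd Vx Va a)
    ⟨rkfMap_injective tl hd Vx Va a, rkfMap_surjective tl hd Vx Va a⟩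

theorem stmt_4_general {x y : Q₀}
    (hxy : Relation.ReflTransGen
      (fun u v => ∃ a : Q₁, (tl a = u ∧ hd a = v) ∨ (hd a = u ∧ tl a = v)) x y) :
    Nonempty (rkfSpace tl hd Vx Va x ≃ₗ[K] rkfSpace tl hd Vx Va y) := by
  induction hxy with
  | refl => exact ⟨.refl K _⟩
  | tail _ adjacent ih =>
    obtain ⟨e⟩ := ih
    obtain ⟨a, ⟨rfl, rfl⟩ | ⟨rfl, rfl⟩⟩ := adjacent
    · exact ⟨e.trans (rkfEquiv tl hd Vx Va a)⟩
    · exact ⟨e.trans (rkfEquiv tl hd Vx Va a).symm⟩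

end Rkf

/-- if `Q` is connected, then `dim_K (rkf V)_x` is independent of the vertex `x`. -/
theorem stmt_4 {K : Type} [Field K] {Q₀ Q₁ : Type} [Fintype Q₀] [Fintype Q₁]
    (tl hd : Q₁ → Q₀)
    (hconn : ∀ x y : Q₀, Relation.ReflTransGen
      (fun u v => ∃ a : Q₁, (tl a = u ∧ hd a = v) ∨ (hd a = u ∧ tl a = v)) x y)
    (Vx : Q₀ → Type) [∀ x, AddCommGroup (Vx x)] [∀ x, Module K (Vx x)]
    [∀ x, FiniteDimensional K (Vx x)]
    (Va : ∀ a : Q₁, Vx (tl a) →ₗ[K] Vx (hd a)) :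
    ∀ x y : Q₀, Module.finrank K (rkfSpace tl hd Vx Va x)
      = Module.finrank K (rkfSpace tl hd Vx Va y) := by
  intro x y
  obtain ⟨e⟩ := stmt_4_general tl hd Vx Va (hconn x y)
  exact e.finrank_eq
end

section
/- Let V, W be representations of a quiver Q over a field K. Then there is an isomorphism of representations rkf(V) ⊗ rkf(W) ≅ rkf(V⊗W): that is, there exists a family of K-linear isomorphisms φ_x : (rkf V)_x ⊗ (rkf W)_x → (rkf(V⊗W))_x, indexed by the vertices x of Q, such that φ_{ha} ∘ ((rkf V)_a ⊗ (rkf W)_a) = (rkf(V⊗W))_a ∘ φ_{ta} for every arrow a. -/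
open Submodule

/-!
Arrows of `V / Δ(V)` are injective, and `rkf V` is the image of `Γ(V)` in `V / Δ(V)`. So both
`rkf V ⊗ rkf W` and `rkf (V ⊗ W)` map to `V / Δ(V) ⊗ W / Δ(W)`, the former injectively.

The images agree because contracting `Γ(V ⊗ W)` with functionals killing `Δ(W)` lands in `Γ(V)`,
and symmetrically. The map from `rkf (V ⊗ W)` is injective by a trace argument. Let `t` in
`Γ(V ⊗ W)` die in `V / Δ(V) ⊗ W / Δ(W)` and let `p` be a functional killing `Δ(V ⊗ W)`. Restricted
to a finite-dimensional subspace carrying `t`, the endomorphism `v ↦ (id ⊗ p (v ⊗ -)) t` of `V` has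
trace `p t`. The vectors that are nilpotent for all such endomorphisms form a coclosed
subrepresentation, so each endomorphism is locally nilpotent on `Δ(V)`, and likewise its transpose
on `Δ(W)`. As `t` vanishes modulo `Δ(V)` and `Δ(W)`, this makes the restricted endomorphism
nilpotent, whence `p t = 0`.
-/

open scoped TensorProduct

section Contraction

variable {R : Type*} [CommSemiring R]
variable {V W V' W' : Type*} [AddCommMonoid V] [Module R V] [AddCommMonoid W] [Module R W]
  [AddCommMonoid V'] [Module R V'] [AddCommMonoid W'] [Module R W']

variable (R V W) in
/-- Contraction of the second factor of a tensor: `t ↦ φ ↦ (id ⊗ φ) t`. The first factor is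
contracted by applying this to `TensorProduct.comm R V W t`. -/
noncomputable def tensorContract : V ⊗[R] W →ₗ[R] Module.Dual R W →ₗ[R] V :=
  ((LinearMap.lTensorHom V).compr₂ (TensorProduct.rid R V).toLinearMap).flip

@[simp]
lemma tensorContract_tmul (v : V) (w : W) (φ : Module.Dual R W) :
    tensorContract R V W (v ⊗ₜ w) φ = φ w • v := by
  simp [tensorContract]

lemma tensorContract_map (A : V →ₗ[R] V') (B : W →ₗ[R] W') (t : V ⊗[R] W) :
    tensorContract R V' W' (TensorProduct.map A B t) =
      A ∘ₗ tensorContract R V W t ∘ₗ B.dualMap := by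
  induction t with
  | zero => simp
  | tmul v w => ext φ; simp
  | add s t hs ht => rw [map_add, map_add, hs, ht, map_add, LinearMap.add_comp, LinearMap.comp_add]

lemma tensorContract_injective [Module.Free R W] :
    Function.Injective (tensorContract R V W) := by
  classical
  let b := Module.Free.chooseBasis R W
  have coord_eq (t : V ⊗[R] W) (i) :
      TensorProduct.equivFinsuppOfBasisRight b t i = tensorContract R V W t (b.coord i) := by
    induction t with
    | zero => simp
    | tmul v w => simp
    | add s t hs ht => simp [hs, ht]
  intro s t hst
  apply (TensorProduct.equivFinsuppOfBasisRight (M := V) b).injective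
  ext i
  rw [coord_eq, coord_eq, hst]

/-- The endomorphism `v ↦ (id ⊗ p (v ⊗ -)) t` of `V` attached to `t ∈ V ⊗ W` and a functional `p` on
`V ⊗ W`; for `t = ∑ vᵢ ⊗ wᵢ` it sends `v` to `∑ p (v ⊗ wᵢ) vᵢ`. -/
noncomputable def transferEnd (t : V ⊗[R] W) (p : Module.Dual R (V ⊗[R] W)) : Module.End R V :=
  tensorContract R V W t ∘ₗ TensorProduct.curry p

/-- The companion of `transferEnd` on `W`, obtained by exchanging the factors. -/
noncomputable abbrev transferEndRight (t : V ⊗[R] W) (p : Module.Dual R (V ⊗[R] W)) :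
    Module.End R W :=
  transferEnd (TensorProduct.comm R V W t) (p ∘ₗ (TensorProduct.comm R V W).symm.toLinearMap)

lemma curry_transferEnd_apply (t : V ⊗[R] W) (p : Module.Dual R (V ⊗[R] W)) (v : V) (w : W) :
    TensorProduct.curry p (transferEnd t p v) w =
      TensorProduct.curry p v (transferEndRight t p w) := by
  have contract_swap (s : V ⊗[R] W) :
      TensorProduct.curry p (tensorContract R V W s (TensorProduct.curry p v)) w =
        TensorProduct.curry p v (tensorContract R W V (TensorProduct.comm R V W s)
          (TensorProduct.curry (p ∘ₗ (TensorProduct.comm R V W).symm.toLinearMap) w)) := by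
    induction s with
    | zero => simp
    | tmul a b => simp [mul_comm]
    | add a b ha hb => simp only [map_add, LinearMap.add_apply, ha, hb]
  exact contract_swap t

lemma curry_transferEnd_pow_apply (t : V ⊗[R] W) (p : Module.Dual R (V ⊗[R] W)) (n : ℕ)
    (v : V) (w : W) :
    TensorProduct.curry p ((transferEnd t p ^ n) v) w =
      TensorProduct.curry p v ((transferEndRight t p ^ n) w) := by
  induction n generalizing v with
  | zero => rfl
  | succ n ih =>
    rw [pow_succ, Module.End.mul_apply, ih, curry_transferEnd_apply, pow_succ',
      Module.End.mul_apply]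

lemma map_map₂_mk (A : V →ₗ[R] V') (B : W →ₗ[R] W') (G : Submodule R V) (H : Submodule R W) :
    (map₂ (TensorProduct.mk R V W) G H).map (TensorProduct.map A B) =
      map₂ (TensorProduct.mk R V' W') (G.map A) (H.map B) := by
  rw [map_map₂, map₂_map_map]
  rfl

lemma map_map₂_tensorContract (A : V →ₗ[R] V') (B : W →ₗ[R] W') (T : Submodule R (V ⊗[R] W))
    (Φ : Submodule R (Module.Dual R W')) :
    (map₂ (tensorContract R V W) T (Φ.map B.dualMap)).map A =
      map₂ (tensorContract R V' W') (T.map (TensorProduct.map A B)) Φ := by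
  have bilinear_eq : ((tensorContract R V W).compl₂ B.dualMap).compr₂ A =
      tensorContract R V' W' ∘ₗ TensorProduct.map A B :=
    LinearMap.ext fun t ↦ (tensorContract_map A B t).symm
  rw [map₂_map_right, map₂_map_left, map_map₂, bilinear_eq]

end Contraction

section Trace

variable {R : Type*} [CommRing R]
variable {V W V' W' : Type*} [AddCommGroup V] [Module R V] [AddCommGroup W] [Module R W]
  [AddCommGroup V'] [Module R V'] [AddCommGroup W'] [Module R W']

lemma tensorContract_mem_of_map_mkQ_eq_zero {D : Submodule R V} {E : Submodule R W}
    {t : V ⊗[R] W} (ht : TensorProduct.map D.mkQ E.mkQ t = 0)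
    {φ : Module.Dual R W} (hφ : φ ∈ E.dualAnnihilator) :
    tensorContract R V W t φ ∈ D := by
  rw [← range_dualMap_mkQ_eq] at hφ
  obtain ⟨ψ, rfl⟩ := hφ
  have := DFunLike.congr_fun (tensorContract_map D.mkQ E.mkQ t) ψ
  rwa [ht, map_zero, LinearMap.zero_apply, eq_comm, LinearMap.comp_apply, mkQ_apply,
    Quotient.mk_eq_zero] at this

lemma trace_transferEnd [Module.Free R V] [Module.Finite R V] (t : V ⊗[R] W)
    (p : Module.Dual R (V ⊗[R] W)) : LinearMap.trace R V (transferEnd t p) = p t := by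
  induction t with
  | zero => simp [transferEnd]
  | tmul v w =>
    have rank_one :
        transferEnd (v ⊗ₜ w) p = ((TensorProduct.curry p).flip w).smulRight v := by
      ext; simp [transferEnd]
    rw [rank_one, LinearMap.trace_smulRight]
    rfl
  | add s t hs ht =>
    have additive : transferEnd (s + t) p = transferEnd s p + transferEnd t p := by
      simp only [transferEnd, map_add, LinearMap.add_comp]
    rw [additive, map_add, hs, ht, map_add]

lemma mem_maxGenEigenspace_zero {f : Module.End R V} {v : V} :
    v ∈ f.maxGenEigenspace 0 ↔ ∃ k : ℕ, (f ^ k) v = 0 := by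
  simp [Module.End.mem_maxGenEigenspace]

lemma comap_maxGenEigenspace_zero_comp (A : V →ₗ[R] V') (B : V' →ₗ[R] V) :
    (Module.End.maxGenEigenspace (A ∘ₗ B) 0).comap A =
      Module.End.maxGenEigenspace (B ∘ₗ A) 0 := by
  have semiconj (k : ℕ) (v : V) : ((A ∘ₗ B) ^ k : Module.End R V') (A v) =
      A (((B ∘ₗ A) ^ k : Module.End R V) v) :=
    LinearMap.congr_fun
      (Module.End.commute_pow_left_of_commute (LinearMap.comp_assoc A B A) k) v
  ext v
  simp only [mem_comap, mem_maxGenEigenspace_zero, semiconj]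
  constructor
  · rintro ⟨k, hk⟩
    exact ⟨k + 1, by rw [pow_succ', Module.End.mul_apply, LinearMap.comp_apply, hk, map_zero]⟩
  · rintro ⟨k, hk⟩
    exact ⟨k, by rw [hk, map_zero]⟩

lemma comap_maxGenEigenspace_transferEnd_map (A : V →ₗ[R] V') (B : W →ₗ[R] W')
    (t : V ⊗[R] W) (p : Module.Dual R (V' ⊗[R] W')) :
    ((transferEnd (TensorProduct.map A B t) p).maxGenEigenspace 0).comap A =
      (transferEnd t (p ∘ₗ TensorProduct.map A B)).maxGenEigenspace 0 := by
  rw [transferEnd, tensorContract_map]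
  exact comap_maxGenEigenspace_zero_comp A
    (tensorContract R V W t ∘ₗ B.dualMap ∘ₗ TensorProduct.curry p)

lemma comap_maxGenEigenspace_transferEndRight_map (A : V →ₗ[R] V') (B : W →ₗ[R] W')
    (t : V ⊗[R] W) (p : Module.Dual R (V' ⊗[R] W')) :
    ((transferEndRight (TensorProduct.map A B t) p).maxGenEigenspace 0).comap B =
      (transferEndRight t (p ∘ₗ TensorProduct.map A B)).maxGenEigenspace 0 := by
  have comm_symm_comp_map :
      (TensorProduct.comm R V' W').symm.toLinearMap ∘ₗ TensorProduct.map B A =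
        TensorProduct.map A B ∘ₗ (TensorProduct.comm R V W).symm.toLinearMap :=
    TensorProduct.ext' fun _ _ ↦ rfl
  rw [transferEndRight, ← TensorProduct.map_comm, comap_maxGenEigenspace_transferEnd_map,
    LinearMap.comp_assoc, comm_symm_comp_map, ← LinearMap.comp_assoc]

lemma exists_pow_apply_eq_zero_of_le_maxGenEigenspace [IsNoetherian R V] {f : Module.End R V}
    {D : Submodule R V} (hD : D ≤ f.maxGenEigenspace 0) : ∃ n : ℕ, ∀ v ∈ D, (f ^ n) v = 0 := by
  refine ⟨f.maxGenEigenspaceIndex 0, fun v hv ↦ ?_⟩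
  have := hD hv
  rwa [Module.End.maxGenEigenspace_eq, Module.End.mem_genEigenspace_nat, zero_smul, sub_zero,
    LinearMap.mem_ker] at this

lemma isNilpotent_transferEnd [IsNoetherian R V] [IsNoetherian R W]
    {D : Submodule R V} {E : Submodule R W} {t : V ⊗[R] W} {p : Module.Dual R (V ⊗[R] W)}
    (hD : D ≤ (transferEnd t p).maxGenEigenspace 0)
    (hE : E ≤ (transferEndRight t p).maxGenEigenspace 0)
    (ht : TensorProduct.map D.mkQ E.mkQ t = 0) : IsNilpotent (transferEnd t p) := by
  obtain ⟨n, hn⟩ := exists_pow_apply_eq_zero_of_le_maxGenEigenspace hD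
  obtain ⟨m, hm⟩ := exists_pow_apply_eq_zero_of_le_maxGenEigenspace hE
  refine ⟨n + (1 + m), LinearMap.ext fun v ↦ ?_⟩
  have annihilates : TensorProduct.curry p ((transferEnd t p ^ m) v) ∈ E.dualAnnihilator := by
    refine (mem_dualAnnihilator _).2 fun w hw ↦ ?_
    rw [curry_transferEnd_pow_apply, hm w hw, map_zero]
  rw [pow_add, pow_add, pow_one]
  exact hn _ (tensorContract_mem_of_map_mkQ_eq_zero ht annihilates)

end Trace

section VectorSpace

variable {K : Type*} [Field K]
variable {V W V' : Type*} [AddCommGroup V] [Module K V] [AddCommGroup W] [Module K W]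
  [AddCommGroup V'] [Module K V']

lemma mapQ_injective_of_comap_le {D : Submodule K V} {D' : Submodule K V'} (f : V →ₗ[K] V')
    (h : D ≤ D'.comap f) (h' : D'.comap f ≤ D) : Function.Injective (D.mapQ D' f h) := by
  rwa [← LinearMap.ker_eq_bot, ker_mapQ, ← LinearMap.le_ker_iff_map, ker_mkQ]

lemma dualAnnihilator_comap_eq_map_dualMap (f : V →ₗ[K] V') (N : Submodule K V') :
    (N.comap f).dualAnnihilator = N.dualAnnihilator.map f.dualMap := by
  have ker_eq : N.comap f = LinearMap.ker (N.mkQ ∘ₗ f) := by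
    rw [LinearMap.ker_comp, ker_mkQ]
  rw [ker_eq, ← LinearMap.range_dualMap_eq_dualAnnihilator_ker, ← LinearMap.dualMap_comp_dualMap,
    LinearMap.range_comp, LinearMap.range_dualMap_eq_dualAnnihilator_ker, ker_mkQ]

lemma mem_map₂_mk_of_tensorContract_mem {G : Submodule K V} {H : Submodule K W} {t : V ⊗[K] W}
    (hG : ∀ φ, tensorContract K V W t φ ∈ G)
    (hH : ∀ φ, tensorContract K W V (TensorProduct.comm K V W t) φ ∈ H) :
    t ∈ map₂ (TensorProduct.mk K V W) G H := by
  obtain ⟨G', hG'⟩ := G.exists_isCompl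
  obtain ⟨H', hH'⟩ := H.exists_isCompl
  have fixed_left : TensorProduct.map (G.projection G' hG') LinearMap.id t = t := by
    apply tensorContract_injective
    ext φ
    rw [tensorContract_map]
    exact projection_apply_of_mem_left hG' (hG _)
  have fixed_right : TensorProduct.map LinearMap.id (H.projection H' hH') t = t := by
    apply (TensorProduct.comm K V W).injective
    apply tensorContract_injective
    ext φ
    rw [← TensorProduct.map_comm, tensorContract_map]
    exact projection_apply_of_mem_left hH' (hH _)
  have fixed : TensorProduct.map (G.projection G' hG') (H.projection H' hH') t = t := by
    conv_rhs => rw [← fixed_left, ← fixed_right, TensorProduct.map_map]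
    rfl
  rw [← range_projection hG', ← range_projection hH', ← TensorProduct.range_map]
  exact ⟨t, fixed⟩

lemma apply_eq_zero_of_map_mkQ_eq_zero {D : Submodule K V} {E : Submodule K W} {t : V ⊗[K] W}
    {p : Module.Dual K (V ⊗[K] W)}
    (hD : D ≤ (transferEnd t p).maxGenEigenspace 0)
    (hE : E ≤ (transferEndRight t p).maxGenEigenspace 0)
    (ht : TensorProduct.map D.mkQ E.mkQ t = 0) : p t = 0 := by
  obtain ⟨A, B, _, _, hAB⟩ :=
    TensorProduct.exists_finite_submodule_of_setFinite {t} (Set.finite_singleton t)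
  obtain ⟨s, rfl⟩ := hAB rfl
  rw [TensorProduct.mapIncl] at hD hE ht ⊢
  have hs : TensorProduct.map (D.comap A.subtype).mkQ (E.comap B.subtype).mkQ s = 0 := by
    apply TensorProduct.map_injective_of_flat_flat _ _
      (mapQ_injective_of_comap_le (D' := D) A.subtype le_rfl le_rfl)
      (mapQ_injective_of_comap_le (D' := E) B.subtype le_rfl le_rfl)
    rw [map_zero, ← ht, TensorProduct.map_map, TensorProduct.map_map]
    rfl
  have nilpotent : IsNilpotent
      (transferEnd s (p ∘ₗ TensorProduct.map A.subtype B.subtype)) := by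
    refine isNilpotent_transferEnd ?_ ?_ hs
    · rw [← comap_maxGenEigenspace_transferEnd_map]
      exact comap_mono hD
    · rw [← comap_maxGenEigenspace_transferEndRight_map]
      exact comap_mono hE
  rw [← LinearMap.comp_apply, ← trace_transferEnd]
  exact (LinearMap.isNilpotent_trace_of_isNilpotent nilpotent).eq_zero

end VectorSpace

section Representation

variable {K : Type} [Field K] {Q₀ Q₁ : Type} (tl hd : Q₁ → Q₀)
variable (Vx : Q₀ → Type) [∀ x, AddCommGroup (Vx x)] [∀ x, Module K (Vx x)]
variable (Va : ∀ a : Q₁, Vx (tl a) →ₗ[K] Vx (hd a))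
variable (Wx : Q₀ → Type) [∀ x, AddCommGroup (Wx x)] [∀ x, Module K (Wx x)]
variable (Wa : ∀ a : Q₁, Wx (tl a) →ₗ[K] Wx (hd a))
variable {Xx : Q₀ → Type} [∀ x, AddCommGroup (Xx x)] [∀ x, Module K (Xx x)]
variable {Xa : ∀ a : Q₁, Xx (tl a) →ₗ[K] Xx (hd a)}
variable {Yx : Q₀ → Type} [∀ x, AddCommGroup (Yx x)] [∀ x, Module K (Yx x)]
variable {Ya : ∀ a : Q₁, Yx (tl a) →ₗ[K] Yx (hd a)}

/-- A family of linear maps is a morphism of representations if it commutes with the arrows. -/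
def IsRepHom (f : ∀ x, Vx x →ₗ[K] Wx x) : Prop :=
  ∀ a : Q₁, f (hd a) ∘ₗ Va a = Wa a ∘ₗ f (tl a)

variable (K) in
/-- The vertex spaces of the tensor product of two representations. -/
abbrev tensorSpace (x : Q₀) : Type := Vx x ⊗[K] Wx x

/-- The arrow maps of the tensor product of two representations. -/
noncomputable abbrev tensorArrow (a : Q₁) :
    tensorSpace K Vx Wx (tl a) →ₗ[K] tensorSpace K Vx Wx (hd a) :=
  TensorProduct.map (Va a) (Wa a)

/-- The vertex spaces of the quotient representation `V / Δ(V)`. -/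
abbrev deltaQuot (x : Q₀) : Type := Vx x ⧸ Delta tl hd Vx Va x

/-- The arrow maps of the quotient representation `V / Δ(V)`. -/
def deltaQuotArrow (a : Q₁) : deltaQuot tl hd Vx Va (tl a) →ₗ[K] deltaQuot tl hd Vx Va (hd a) :=
  mapQ _ _ (Va a) (map_le_iff_le_comap.1 (delta_subrep tl hd Vx Va a))

variable {tl hd Vx Va Wx Wa}

namespace IsRepHom

variable {f : ∀ x, Vx x →ₗ[K] Wx x}

lemma apply_arrow (hf : IsRepHom tl hd Vx Va Wx Wa f) (a : Q₁) (v : Vx (tl a)) :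
    f (hd a) (Va a v) = Wa a (f (tl a) v) :=
  LinearMap.congr_fun (hf a) v

lemma comp {g : ∀ x, Wx x →ₗ[K] Xx x} (hg : IsRepHom tl hd Wx Wa Xx Xa g)
    (hf : IsRepHom tl hd Vx Va Wx Wa f) :
    IsRepHom tl hd Vx Va Xx Xa fun x ↦ g x ∘ₗ f x := fun a ↦ by
  rw [LinearMap.comp_assoc, hf a, ← LinearMap.comp_assoc, hg a, LinearMap.comp_assoc]

lemma tensor {g : ∀ x, Xx x →ₗ[K] Yx x} (hf : IsRepHom tl hd Vx Va Wx Wa f)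
    (hg : IsRepHom tl hd Xx Xa Yx Ya g) :
    IsRepHom tl hd (tensorSpace K Vx Xx) (tensorArrow tl hd Vx Va Xx Xa)
      (tensorSpace K Wx Yx) (tensorArrow tl hd Wx Wa Yx Ya)
      fun x ↦ TensorProduct.map (f x) (g x) := fun a ↦ by
  rw [← TensorProduct.map_comp, ← TensorProduct.map_comp, hf a, hg a]

lemma repIso_of_range_eq {g : ∀ x, Xx x →ₗ[K] Wx x}
    (hf : IsRepHom tl hd Vx Va Wx Wa f) (hg : IsRepHom tl hd Xx Xa Wx Wa g)
    (f_inj : ∀ x, Function.Injective (f x)) (g_inj : ∀ x, Function.Injective (g x))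
    (range_eq : ∀ x, LinearMap.range (f x) = LinearMap.range (g x)) :
    RepIso tl hd Vx Va Xx Xa := by
  let φ (x : Q₀) : Vx x ≃ₗ[K] Xx x := LinearEquiv.ofInjective (f x) (f_inj x) ≪≫ₗ
    LinearEquiv.ofEq _ _ (range_eq x) ≪≫ₗ (LinearEquiv.ofInjective (g x) (g_inj x)).symm
  have g_φ (x : Q₀) (v : Vx x) : g x (φ x v) = f x v :=
    congrArg Subtype.val ((LinearEquiv.ofInjective (g x) (g_inj x)).apply_symm_apply _)
  refine ⟨φ, fun a v ↦ g_inj (hd a) ?_⟩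
  rw [g_φ, hf.apply_arrow, hg.apply_arrow, g_φ]

lemma map_gamma_le (hf : IsRepHom tl hd Vx Va Wx Wa f) (x : Q₀) :
    (Gamma tl hd Vx Va x).map (f x) ≤ Gamma tl hd Wx Wa x := by
  refine le_gamma tl hd Wx Wa (U := fun y ↦ (Gamma tl hd Vx Va y).map (f y)) (fun a ↦ ?_) x
  rw [← map_comp, ← hf a, map_comp, gamma_epi]

end IsRepHom

lemma isCoclosedSub_iff_comap_eq {N : ∀ x, Submodule K (Vx x)} :
    IsCoclosedSub tl hd Vx Va N ↔ ∀ a, (N (hd a)).comap (Va a) = N (tl a) := by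
  simp only [IsCoclosedSub, IsSubrep, map_le_iff_le_comap, ← forall_and, le_antisymm_iff, and_comm]

variable (tl hd Vx Va) in
lemma comap_delta (a : Q₁) :
    (Delta tl hd Vx Va (hd a)).comap (Va a) = Delta tl hd Vx Va (tl a) :=
  isCoclosedSub_iff_comap_eq.1 ⟨delta_subrep tl hd Vx Va, fun a ↦ le_iInf fun N ↦
    (comap_mono (delta_le tl hd Vx Va N.2 (hd a))).trans (N.2.2 a)⟩ a

variable (tl hd Vx Va) in
lemma map_dualMap_dualAnnihilator_delta (a : Q₁) :
    (Delta tl hd Vx Va (hd a)).dualAnnihilator.map (Va a).dualMap =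
      (Delta tl hd Vx Va (tl a)).dualAnnihilator := by
  rw [← dualAnnihilator_comap_eq_map_dualMap, comap_delta]

lemma IsRepHom.delta_le_comap {f : ∀ x, Vx x →ₗ[K] Wx x} (hf : IsRepHom tl hd Vx Va Wx Wa f)
    (x : Q₀) : Delta tl hd Vx Va x ≤ (Delta tl hd Wx Wa x).comap (f x) := by
  refine delta_le tl hd Vx Va (N := fun y ↦ (Delta tl hd Wx Wa y).comap (f y))
    (isCoclosedSub_iff_comap_eq.2 fun a ↦ ?_) x
  rw [← comap_comp, hf a, comap_comp, comap_delta]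

lemma delta_eq_bot_of_injective (hV : ∀ a, Function.Injective (Va a)) (x : Q₀) :
    Delta tl hd Vx Va x = ⊥ :=
  eq_bot_iff.2 <| delta_le tl hd Vx Va (N := fun _ ↦ ⊥)
    (isCoclosedSub_iff_comap_eq.2 fun a ↦ LinearMap.ker_eq_bot.2 (hV a)) x

variable (tl hd Vx Va) in
lemma deltaQuotArrow_injective (a : Q₁) : Function.Injective (deltaQuotArrow tl hd Vx Va a) :=
  mapQ_injective_of_comap_le _ _ (comap_delta tl hd Vx Va a).le

variable (tl hd Vx Va) in
lemma isRepHom_mkQ_delta :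
    IsRepHom tl hd Vx Va (deltaQuot tl hd Vx Va) (deltaQuotArrow tl hd Vx Va)
      fun x ↦ (Delta tl hd Vx Va x).mkQ :=
  fun _ ↦ rfl

section Rkf

variable (tl hd Vx Va)

/-- The inclusion of `rkf V = (Γ(V) + Δ(V)) / Δ(V)` into `V / Δ(V)`. -/
def rkfInclusion (x : Q₀) : rkfSpace tl hd Vx Va x →ₗ[K] deltaQuot tl hd Vx Va x :=
  mapQ _ _ (GD tl hd Vx Va x).subtype le_rfl

lemma isRepHom_rkfInclusion :
    IsRepHom tl hd (rkfSpace tl hd Vx Va) (rkfMap tl hd Vx Va)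
      (deltaQuot tl hd Vx Va) (deltaQuotArrow tl hd Vx Va) (rkfInclusion tl hd Vx Va) :=
  fun _ ↦ linearMap_qext _ rfl

lemma rkfInclusion_injective (x : Q₀) : Function.Injective (rkfInclusion tl hd Vx Va x) :=
  mapQ_injective_of_comap_le _ _ le_rfl

lemma range_rkfInclusion (x : Q₀) :
    LinearMap.range (rkfInclusion tl hd Vx Va x) =
      (Gamma tl hd Vx Va x).map (Delta tl hd Vx Va x).mkQ := by
  rw [rkfInclusion, range_mapQ, range_subtype, Submodule.map_sup, mkQ_map_self, sup_bot_eq]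

end Rkf

section Tensor

variable (tl hd Vx Va Wx Wa)

lemma isRepHom_tensorComm :
    IsRepHom tl hd (tensorSpace K Vx Wx) (tensorArrow tl hd Vx Va Wx Wa)
      (tensorSpace K Wx Vx) (tensorArrow tl hd Wx Wa Vx Va)
      fun x ↦ (TensorProduct.comm K (Vx x) (Wx x)).toLinearMap :=
  fun _ ↦ TensorProduct.ext' fun _ _ ↦ rfl

lemma map₂_mk_gamma_le (x : Q₀) :
    map₂ (TensorProduct.mk K (Vx x) (Wx x)) (Gamma tl hd Vx Va x) (Gamma tl hd Wx Wa x) ≤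
      Gamma tl hd (tensorSpace K Vx Wx) (tensorArrow tl hd Vx Va Wx Wa) x := by
  refine le_gamma tl hd (tensorSpace K Vx Wx) (tensorArrow tl hd Vx Va Wx Wa)
    (U := fun y ↦ map₂ (TensorProduct.mk K (Vx y) (Wx y)) (Gamma tl hd Vx Va y)
      (Gamma tl hd Wx Wa y)) (fun a ↦ ?_) x
  rw [map_map₂_mk, gamma_epi, gamma_epi]

lemma map₂_tensorContract_gamma_le (x : Q₀) :
    map₂ (tensorContract K (Vx x) (Wx x))
        (Gamma tl hd (tensorSpace K Vx Wx) (tensorArrow tl hd Vx Va Wx Wa) x)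
        (Delta tl hd Wx Wa x).dualAnnihilator ≤
      Gamma tl hd Vx Va x := by
  refine le_gamma tl hd Vx Va (U := fun y ↦ map₂ (tensorContract K (Vx y) (Wx y))
    (Gamma tl hd (tensorSpace K Vx Wx) (tensorArrow tl hd Vx Va Wx Wa) y)
    (Delta tl hd Wx Wa y).dualAnnihilator) (fun a ↦ ?_) x
  have map_gamma := gamma_epi tl hd _ (tensorArrow tl hd Vx Va Wx Wa) a
  beta_reduce
  rw [← map_dualMap_dualAnnihilator_delta, map_map₂_tensorContract, map_gamma]

variable {tl hd Vx Va Wx Wa}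

lemma comm_mem_gamma {x : Q₀} {t : Vx x ⊗[K] Wx x}
    (ht : t ∈ Gamma tl hd (tensorSpace K Vx Wx) (tensorArrow tl hd Vx Va Wx Wa) x) :
    TensorProduct.comm K (Vx x) (Wx x) t ∈
      Gamma tl hd (tensorSpace K Wx Vx) (tensorArrow tl hd Wx Wa Vx Va) x :=
  (isRepHom_tensorComm tl hd Vx Va Wx Wa).map_gamma_le x (mem_map_of_mem ht)

lemma tensorContract_map_mkQ_mem {x : Q₀} {t : Vx x ⊗[K] Wx x}
    (ht : t ∈ Gamma tl hd (tensorSpace K Vx Wx) (tensorArrow tl hd Vx Va Wx Wa) x)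
    (φ : Module.Dual K (deltaQuot tl hd Wx Wa x)) :
    tensorContract K (deltaQuot tl hd Vx Va x) (deltaQuot tl hd Wx Wa x)
        (TensorProduct.map (Delta tl hd Vx Va x).mkQ (Delta tl hd Wx Wa x).mkQ t) φ ∈
      (Gamma tl hd Vx Va x).map (Delta tl hd Vx Va x).mkQ := by
  have φ_mkQ_mem :
      (Delta tl hd Wx Wa x).mkQ.dualMap φ ∈ (Delta tl hd Wx Wa x).dualAnnihilator := by
    rw [← range_dualMap_mkQ_eq]
    exact LinearMap.mem_range_self _ φ
  rw [tensorContract_map]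
  exact mem_map_of_mem
    (map₂_tensorContract_gamma_le tl hd Vx Va Wx Wa x (apply_mem_map₂ _ ht φ_mkQ_mem))

variable (tl hd Vx Va Wx Wa) in
lemma map_mkQ_gamma_tensor (x : Q₀) :
    (Gamma tl hd (tensorSpace K Vx Wx) (tensorArrow tl hd Vx Va Wx Wa) x).map
        (TensorProduct.map (Delta tl hd Vx Va x).mkQ (Delta tl hd Wx Wa x).mkQ) =
      map₂ (TensorProduct.mk K _ _) ((Gamma tl hd Vx Va x).map (Delta tl hd Vx Va x).mkQ)
        ((Gamma tl hd Wx Wa x).map (Delta tl hd Wx Wa x).mkQ) := by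
  apply le_antisymm
  · rintro _ ⟨t, ht, rfl⟩
    refine mem_map₂_mk_of_tensorContract_mem (tensorContract_map_mkQ_mem ht) fun φ ↦ ?_
    rw [← TensorProduct.map_comm]
    exact tensorContract_map_mkQ_mem (comm_mem_gamma ht) φ
  · rw [← map_map₂_mk]
    exact map_mono (map₂_mk_gamma_le tl hd Vx Va Wx Wa x)

lemma delta_le_maxGenEigenspace_transferEnd {x : Q₀} {t : Vx x ⊗[K] Wx x}
    (ht : t ∈ Gamma tl hd (tensorSpace K Vx Wx) (tensorArrow tl hd Vx Va Wx Wa) x)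
    {p : Module.Dual K (Vx x ⊗[K] Wx x)}
    (hp : p ∈ (Delta tl hd (tensorSpace K Vx Wx)
      (tensorArrow tl hd Vx Va Wx Wa) x).dualAnnihilator) :
    Delta tl hd Vx Va x ≤ (transferEnd t p).maxGenEigenspace 0 := by
  let ΓT := Gamma tl hd (tensorSpace K Vx Wx) (tensorArrow tl hd Vx Va Wx Wa)
  let ΔT := Delta tl hd (tensorSpace K Vx Wx) (tensorArrow tl hd Vx Va Wx Wa)
  let N (y : Q₀) : Submodule K (Vx y) :=
    ⨅ t ∈ ΓT y, ⨅ p ∈ (ΔT y).dualAnnihilator, (transferEnd t p).maxGenEigenspace 0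
  have N_coclosed : IsCoclosedSub tl hd Vx Va N := by
    refine isCoclosedSub_iff_comap_eq.2 fun a ↦ ?_
    have ΓT_eq : ΓT (hd a) = (ΓT (tl a)).map (TensorProduct.map (Va a) (Wa a)) :=
      (gamma_epi tl hd _ (tensorArrow tl hd Vx Va Wx Wa) a).symm
    have ΔT_eq : (ΔT (tl a)).dualAnnihilator =
        (ΔT (hd a)).dualAnnihilator.map (TensorProduct.map (Va a) (Wa a)).dualMap :=
      (map_dualMap_dualAnnihilator_delta tl hd _ (tensorArrow tl hd Vx Va Wx Wa) a).symm
    ext v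
    simp only [N, ΓT_eq, ΔT_eq, comap_iInf, mem_iInf, mem_map, forall_exists_index, and_imp,
      forall_apply_eq_imp_iff₂, comap_maxGenEigenspace_transferEnd_map]
    rfl
  refine (delta_le tl hd Vx Va N_coclosed x).trans ?_
  exact (iInf₂_le t ht).trans (iInf₂_le p hp)

lemma mem_delta_of_mem_gamma_of_map_mkQ_eq_zero {x : Q₀} {t : Vx x ⊗[K] Wx x}
    (ht : t ∈ Gamma tl hd (tensorSpace K Vx Wx) (tensorArrow tl hd Vx Va Wx Wa) x)
    (h0 : TensorProduct.map (Delta tl hd Vx Va x).mkQ (Delta tl hd Wx Wa x).mkQ t = 0) :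
    t ∈ Delta tl hd (tensorSpace K Vx Wx) (tensorArrow tl hd Vx Va Wx Wa) x := by
  refine (Subspace.forall_mem_dualAnnihilator_apply_eq_zero_iff _ t).1 fun p hp ↦ ?_
  have hp_comm : p ∘ₗ (TensorProduct.comm K (Vx x) (Wx x)).symm.toLinearMap ∈
      (Delta tl hd (tensorSpace K Wx Vx) (tensorArrow tl hd Wx Wa Vx Va) x).dualAnnihilator :=
    (mem_dualAnnihilator _).2 fun s hs ↦ (mem_dualAnnihilator p).1 hp _
      ((isRepHom_tensorComm tl hd Wx Wa Vx Va).delta_le_comap x hs)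
  exact apply_eq_zero_of_map_mkQ_eq_zero (delta_le_maxGenEigenspace_transferEnd ht hp)
    (delta_le_maxGenEigenspace_transferEnd (comm_mem_gamma ht) hp_comm) h0

variable (tl hd Vx Va Wx Wa)

lemma delta_tensor_le_ker (x : Q₀) :
    Delta tl hd (tensorSpace K Vx Wx) (tensorArrow tl hd Vx Va Wx Wa) x ≤
      LinearMap.ker (TensorProduct.map (Delta tl hd Vx Va x).mkQ (Delta tl hd Wx Wa x).mkQ) := by
  have arrows_injective (a : Q₁) : Function.Injective
      (tensorArrow tl hd _ (deltaQuotArrow tl hd Vx Va) _ (deltaQuotArrow tl hd Wx Wa) a) :=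
    TensorProduct.map_injective_of_flat_flat _ _ (deltaQuotArrow_injective tl hd Vx Va a)
      (deltaQuotArrow_injective tl hd Wx Wa a)
  have projections_isRepHom :=
    (isRepHom_mkQ_delta tl hd Vx Va).tensor (isRepHom_mkQ_delta tl hd Wx Wa)
  have := projections_isRepHom.delta_le_comap x
  rwa [delta_eq_bot_of_injective arrows_injective] at this

/-- The map `rkf (V ⊗ W) → V / Δ(V) ⊗ W / Δ(W)` induced by the projections. -/
noncomputable def rkfTensorInclusion (x : Q₀) :
    rkfSpace tl hd (tensorSpace K Vx Wx) (tensorArrow tl hd Vx Va Wx Wa) x →ₗ[K]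
      tensorSpace K (deltaQuot tl hd Vx Va) (deltaQuot tl hd Wx Wa) x :=
  liftQ _ _ (delta_tensor_le_ker tl hd Vx Va Wx Wa x) ∘ₗ
    rkfInclusion tl hd (tensorSpace K Vx Wx) (tensorArrow tl hd Vx Va Wx Wa) x

lemma isRepHom_rkfTensorInclusion :
    IsRepHom tl hd (rkfSpace tl hd (tensorSpace K Vx Wx) (tensorArrow tl hd Vx Va Wx Wa))
      (rkfMap tl hd (tensorSpace K Vx Wx) (tensorArrow tl hd Vx Va Wx Wa))
      (tensorSpace K (deltaQuot tl hd Vx Va) (deltaQuot tl hd Wx Wa))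
      (tensorArrow tl hd _ (deltaQuotArrow tl hd Vx Va) _ (deltaQuotArrow tl hd Wx Wa))
      (rkfTensorInclusion tl hd Vx Va Wx Wa) := by
  refine .comp (Wa := deltaQuotArrow tl hd _ (tensorArrow tl hd Vx Va Wx Wa)) (fun a ↦ ?_)
    (isRepHom_rkfInclusion tl hd _ (tensorArrow tl hd Vx Va Wx Wa))
  exact linearMap_qext _
    (((isRepHom_mkQ_delta tl hd Vx Va).tensor (isRepHom_mkQ_delta tl hd Wx Wa)) a)

lemma rkfTensorInclusion_injective (x : Q₀) :
    Function.Injective (rkfTensorInclusion tl hd Vx Va Wx Wa x) := by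
  refine (injective_iff_map_eq_zero _).2 fun u hu ↦ ?_
  obtain ⟨t, ht, htu⟩ : rkfInclusion tl hd _ (tensorArrow tl hd Vx Va Wx Wa) x u ∈
      (Gamma tl hd _ (tensorArrow tl hd Vx Va Wx Wa) x).map (mkQ _) :=
    range_rkfInclusion tl hd _ (tensorArrow tl hd Vx Va Wx Wa) x ▸ LinearMap.mem_range_self _ u
  have t_mem_delta := mem_delta_of_mem_gamma_of_map_mkQ_eq_zero ht (by
    rwa [rkfTensorInclusion, LinearMap.comp_apply, ← htu] at hu)
  apply rkfInclusion_injective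
  rw [map_zero, ← htu]
  exact (Quotient.mk_eq_zero _).2 t_mem_delta

lemma range_rkfTensorInclusion (x : Q₀) :
    LinearMap.range (rkfTensorInclusion tl hd Vx Va Wx Wa x) =
      LinearMap.range (TensorProduct.map (rkfInclusion tl hd Vx Va x)
        (rkfInclusion tl hd Wx Wa x)) := by
  rw [rkfTensorInclusion, LinearMap.range_comp, range_rkfInclusion, ← map_comp, liftQ_mkQ,
    map_mkQ_gamma_tensor, TensorProduct.range_map, range_rkfInclusion, range_rkfInclusion]

end Tensor

end Representation

theorem stmt_8_general {K : Type} [Field K] {Q₀ Q₁ : Type}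
    (tl hd : Q₁ → Q₀)
    (Vx : Q₀ → Type) [∀ x, AddCommGroup (Vx x)] [∀ x, Module K (Vx x)]
    (Va : ∀ a : Q₁, Vx (tl a) →ₗ[K] Vx (hd a))
    (Wx : Q₀ → Type) [∀ x, AddCommGroup (Wx x)] [∀ x, Module K (Wx x)]
    (Wa : ∀ a : Q₁, Wx (tl a) →ₗ[K] Wx (hd a)) :
    ∃ φ : ∀ x : Q₀,
        TensorProduct K (rkfSpace tl hd Vx Va x) (rkfSpace tl hd Wx Wa x) ≃ₗ[K]
          rkfSpace tl hd (fun y => TensorProduct K (Vx y) (Wx y))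
            (fun a => TensorProduct.map (Va a) (Wa a)) x,
      ∀ (a : Q₁)
        (v : TensorProduct K (rkfSpace tl hd Vx Va (tl a)) (rkfSpace tl hd Wx Wa (tl a))),
        φ (hd a) (TensorProduct.map (rkfMap tl hd Vx Va a) (rkfMap tl hd Wx Wa a) v)
          = rkfMap tl hd (fun y => TensorProduct K (Vx y) (Wx y))
              (fun a => TensorProduct.map (Va a) (Wa a)) a (φ (tl a) v) :=
  IsRepHom.repIso_of_range_eq
    ((isRepHom_rkfInclusion tl hd Vx Va).tensor (isRepHom_rkfInclusion tl hd Wx Wa))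
    (isRepHom_rkfTensorInclusion tl hd Vx Va Wx Wa)
    (fun x ↦ TensorProduct.map_injective_of_flat_flat _ _ (rkfInclusion_injective tl hd Vx Va x)
      (rkfInclusion_injective tl hd Wx Wa x))
    (rkfTensorInclusion_injective tl hd Vx Va Wx Wa)
    fun x ↦ (range_rkfTensorInclusion tl hd Vx Va Wx Wa x).symm

/-- the global tensor functor is multiplicative:
`rkf(V) ⊗ rkf(W) ≅ rkf(V ⊗ W)` as representations of `Q`. -/
theorem stmt_8 {K : Type} [Field K] {Q₀ Q₁ : Type} [Fintype Q₀] [Fintype Q₁]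
    (tl hd : Q₁ → Q₀)
    (Vx : Q₀ → Type) [∀ x, AddCommGroup (Vx x)] [∀ x, Module K (Vx x)]
    [∀ x, FiniteDimensional K (Vx x)]
    (Va : ∀ a : Q₁, Vx (tl a) →ₗ[K] Vx (hd a))
    (Wx : Q₀ → Type) [∀ x, AddCommGroup (Wx x)] [∀ x, Module K (Wx x)]
    [∀ x, FiniteDimensional K (Wx x)]
    (Wa : ∀ a : Q₁, Wx (tl a) →ₗ[K] Wx (hd a)) :
    ∃ φ : ∀ x : Q₀,
        TensorProduct K (rkfSpace tl hd Vx Va x) (rkfSpace tl hd Wx Wa x) ≃ₗ[K]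
          rkfSpace tl hd (fun y => TensorProduct K (Vx y) (Wx y))
            (fun a => TensorProduct.map (Va a) (Wa a)) x,
      ∀ (a : Q₁)
        (v : TensorProduct K (rkfSpace tl hd Vx Va (tl a)) (rkfSpace tl hd Wx Wa (tl a))),
        φ (hd a) (TensorProduct.map (rkfMap tl hd Vx Va a) (rkfMap tl hd Wx Wa a) v)
          = rkfMap tl hd (fun y => TensorProduct K (Vx y) (Wx y))
              (fun a => TensorProduct.map (Va a) (Wa a)) a (φ (tl a) v) :=
  stmt_8_general tl hd Vx Va Wx Wa
end
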